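/- arXiv:2401.05640 — 2 statements merged into one kernel-verified Lean document; each statement's English description precedes it below -/
import Mathlib

section
/- Let G be a distance-regular graph of diameter 3 with intersection array {k, b₁, b₂; 1, c₂, c₃}, with distinct adjacency eigenvalues k > θ₁ > θ₂ > θ₃, and let q be a real number with q ∉ {q₁, q₂, q₃} and either q > 0 or q ≤ −1. Then the q-distance matrix 𝔻_q has exactly four distinct eigenvalues. -/
open Matrix

variable {V : Type*} [Fintype V] [DecidableEq V]

/-- The distance-`i` matrix of a graph: the `(x,y)` entry is 1 if `dist x y = i`, else 0. -/
noncomputable def distM (G : SimpleGraph V) (i : ℕ) : Matrix V V ℝ :=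
  Matrix.of fun x y => if G.dist x y = i then (1 : ℝ) else 0

/-- The `q`-distance matrix `𝔻_q = ∑_{i=1}^D (1 + 1/q + ⋯ + 1/q^{i-1}) • A_i`. -/
noncomputable def qDist (G : SimpleGraph V) (D : ℕ) (q : ℝ) : Matrix V V ℝ :=
  ∑ i ∈ Finset.Icc 1 D, (∑ j ∈ Finset.range i, (1 / q) ^ j) • distM G i

/-- `G` is distance-regular with diameter `D` and intersection numbers `b i`, `c i`
(with `c 1 = 1`): for any vertices `x, y` at distance `i ≤ D`, the number of neighbors
of `y` at distance `i - 1` from `x` is `c i` and the number of neighbors of `y` at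
distance `i + 1` from `x` is `b i`. -/
def IsDRG (G : SimpleGraph V) (D : ℕ) (b c : ℕ → ℕ) : Prop :=
  G.Connected ∧
  (∀ x y : V, G.dist x y ≤ D) ∧
  (∃ x y : V, G.dist x y = D) ∧
  c 1 = 1 ∧
  ∀ i ≤ D, ∀ x y : V, G.dist x y = i →
    ({z : V | G.Adj y z ∧ G.dist x z = i - 1} : Set V).ncard = c i ∧
    ({z : V | G.Adj y z ∧ G.dist x z = i + 1} : Set V).ncard = b i

/-- `a i = k - b i - c i` as a real number, where `k = b 0`. -/
noncomputable def aInt (b c : ℕ → ℕ) (i : ℕ) : ℝ := (b 0 : ℝ) - (b i : ℝ) - (c i : ℝ)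

theorem aux_mem_spec (M : Matrix V V ℝ) (μ : ℝ) :
    μ ∈ spectrum ℝ M ↔ ∃ v : V → ℝ, v ≠ 0 ∧ M *ᵥ v = μ • v := by
  rw [← Matrix.spectrum_toLin', ← Module.End.hasEigenvalue_iff_mem_spectrum]
  constructor
  · intro h
    obtain ⟨v, hv⟩ := h.exists_hasEigenvector
    exact ⟨v, hv.2, by simpa using hv.apply_eq_smul⟩
  · rintro ⟨v, hv, h⟩
    exact Module.End.hasEigenvalue_of_hasEigenvector
      ⟨Module.End.mem_eigenspace_iff.2 (by simpa using h), hv⟩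

theorem aux_subset (A D : Matrix V V ℝ) (hA : A.IsHermitian) (hD : Dᵀ = D) (T : Set ℝ)
    (h : ∀ (v : V → ℝ) (θ : ℝ), v ≠ 0 → A *ᵥ v = θ • v → ∃ t ∈ T, D *ᵥ v = t • v) :
    spectrum ℝ D ⊆ T := by
  intro μ hμ
  obtain ⟨v, hv, hDv⟩ := (aux_mem_spec D μ).1 hμ
  by_contra hT
  apply hv
  have key : ∀ i, inner ℝ (hA.eigenvectorBasis i) (WithLp.toLp 2 v) = (0 : ℝ) := by
    intro i
    have hne : (WithLp.ofLp (hA.eigenvectorBasis i) : V → ℝ) ≠ 0 := by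
      intro h0
      apply hA.eigenvectorBasis.toBasis.ne_zero i
      ext x
      simpa using congrFun h0 x
    obtain ⟨t, ht, hDt⟩ := h _ _ hne (hA.mulVec_eigenvectorBasis i)
    have e1 : (D *ᵥ (WithLp.ofLp (hA.eigenvectorBasis i))) ⬝ᵥ v
        = (WithLp.ofLp (hA.eigenvectorBasis i)) ⬝ᵥ (D *ᵥ v) := by
      rw [Matrix.dotProduct_mulVec, ← Matrix.mulVec_transpose, hD]
    rw [hDt, hDv, smul_dotProduct, dotProduct_smul, smul_eq_mul, smul_eq_mul] at e1
    have hne2 : t ≠ μ := fun e => hT (e ▸ ht)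
    have e2 : (WithLp.ofLp (hA.eigenvectorBasis i)) ⬝ᵥ v = 0 := by
      have : (t - μ) * ((WithLp.ofLp (hA.eigenvectorBasis i)) ⬝ᵥ v) = 0 := by
        linear_combination e1
      exact (mul_eq_zero.1 this).resolve_left (sub_ne_zero.2 hne2)
    rw [EuclideanSpace.inner_eq_star_dotProduct]
    simpa [dotProduct_comm] using e2
  have : WithLp.toLp 2 v = (0 : EuclideanSpace ℝ V) := by
    rw [← hA.eigenvectorBasis.sum_repr (WithLp.toLp 2 v)]
    simp [OrthonormalBasis.repr_apply_apply, key]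
  funext x
  simpa using congrArg (fun w : EuclideanSpace ℝ V => w x) this

theorem aux_const (G : SimpleGraph V) (hc : G.Connected) (M : Matrix V V ℝ) (S : ℝ)
    (h0 : ∀ x y, 0 ≤ M x y) (hadj : ∀ x y, G.Adj x y → 0 < M x y)
    (hS : ∀ x, ∑ y, M x y = S) (v : V → ℝ) (hv : M *ᵥ v = S • v) : ∀ x y, v x = v y := by
  have := hc.nonempty
  obtain ⟨m, hm⟩ := Finite.exists_max v
  have step : ∀ x y, v x = v m → G.Adj x y → v y = v m := by
    intro x y hx hxy
    have e : ∑ z, M x z * (v m - v z) = 0 := by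
      have := congrFun hv x
      simp only [mulVec, dotProduct, Pi.smul_apply, smul_eq_mul] at this
      simp only [mul_sub, Finset.sum_sub_distrib, ← Finset.sum_mul, hS, this, hx, sub_self]
    have := (Finset.sum_eq_zero_iff_of_nonneg
      (fun z _ => mul_nonneg (h0 x z) (sub_nonneg.2 (hm z)))).1 e y (Finset.mem_univ y)
    have h2 := (mul_eq_zero.1 this).resolve_left (hadj x y hxy).ne'
    linarith
  have all : ∀ x, v x = v m := by
    intro x
    obtain ⟨p⟩ := hc.preconnected m x
    have walk : ∀ (a b : V) (p : G.Walk a b), v a = v m → v b = v m := by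
      intro a b p
      induction p with
      | nil => exact id
      | cons h _ ih => exact fun ha => ih (step _ _ ha h)
    exact walk _ _ p rfl
  intro x y
  rw [all x, all y]

theorem aux_N (G : SimpleGraph V) (j : ℕ) (x y : V) :
    (distM G j * distM G 1) x y
      = (({z : V | G.Adj y z ∧ G.dist x z = j} : Set V).ncard : ℝ) := by
  classical
  rw [Set.ncard_eq_toFinset_card']
  simp only [Matrix.mul_apply, distM, Matrix.of_apply, mul_ite, mul_one, mul_zero]
  rw [Finset.card_eq_sum_ones, Nat.cast_sum, Set.toFinset_ofPred, Finset.sum_filter]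
  refine Finset.sum_congr rfl fun z _ => ?_
  simp only [SimpleGraph.dist_eq_one_iff_adj, G.adj_comm z y]
  by_cases h1 : G.Adj y z <;> by_cases h2 : G.dist x z = j <;> simp [h1, h2]

theorem aux_near (G : SimpleGraph V) (hc : G.Connected) {x y z : V} (h : G.Adj y z) :
    G.dist x z ≤ G.dist x y + 1 ∧ G.dist x y ≤ G.dist x z + 1 := by
  have h1 := hc.dist_triangle (u := x) (v := y) (w := z)
  have h2 := hc.dist_triangle (u := x) (v := z) (w := y)
  have h3 := SimpleGraph.dist_eq_one_iff_adj.2 h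
  have h4 := SimpleGraph.dist_eq_one_iff_adj.2 h.symm
  omega

theorem aux_far (G : SimpleGraph V) (hc : G.Connected) (x y : V) (j : ℕ)
    (h : G.dist x y + 1 < j ∨ j + 1 < G.dist x y) :
    ({z : V | G.Adj y z ∧ G.dist x z = j} : Set V).ncard = 0 := by
  have : ({z : V | G.Adj y z ∧ G.dist x z = j} : Set V) = ∅ := by
    ext z
    simp only [Set.mem_ofPred_eq, Set.mem_empty_iff_false, iff_false, not_and]
    intro hz
    have := aux_near G hc (x := x) hz
    omega
  rw [this, Set.ncard_empty]

theorem aux_deg (G : SimpleGraph V) (b c : ℕ → ℕ) (hG : IsDRG G 3 b c) (y : V) :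
    ({z : V | G.Adj y z} : Set V).ncard = b 0 := by
  rw [← (hG.2.2.2.2 0 (by norm_num) y y (by simp)).2]
  congr 1
  ext z
  simp only [Set.mem_ofPred_eq, zero_add, SimpleGraph.dist_eq_one_iff_adj, and_self]

theorem aux_a (G : SimpleGraph V) (b c : ℕ → ℕ) (hG : IsDRG G 3 b c) (x y : V) (i : ℕ)
    (hi : G.dist x y = i) (hi0 : 1 ≤ i) :
    (({z : V | G.Adj y z ∧ G.dist x z = i} : Set V).ncard : ℝ) = aInt b c i := by
  have hi3 : i ≤ 3 := hi ▸ hG.2.1 x y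
  obtain ⟨e1, e2⟩ := hG.2.2.2.2 i hi3 x y hi
  have e3 := aux_deg G b c hG y
  have hu : ({z : V | G.Adj y z} : Set V) =
      ({z : V | G.Adj y z ∧ G.dist x z = i - 1} ∪ {z : V | G.Adj y z ∧ G.dist x z = i + 1}) ∪
       {z : V | G.Adj y z ∧ G.dist x z = i} := by
    ext z
    simp only [Set.mem_ofPred_eq, Set.mem_union]
    constructor
    · intro hz
      have := aux_near G hG.1 (x := x) hz
      have h' : G.dist x z = i - 1 ∨ G.dist x z = i + 1 ∨ G.dist x z = i := by omega
      tauto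
    · tauto
  rw [hu, Set.ncard_union_eq, Set.ncard_union_eq, e1, e2] at e3
  · rw [aInt, ← e3]
    push_cast
    ring
  · rw [Set.disjoint_left]
    rintro z ⟨_, h⟩ ⟨_, h'⟩
    omega
  · rw [Set.disjoint_left]
    rintro z (⟨_, h⟩ | ⟨_, h⟩) ⟨_, h'⟩ <;> omega

theorem aux_I3 (G : SimpleGraph V) (b c : ℕ → ℕ) (hG : IsDRG G 3 b c) :
    distM G 1 * distM G 1 = (b 0 : ℝ) • (1 : Matrix V V ℝ) + aInt b c 1 • distM G 1
      + (c 2 : ℝ) • distM G 2 := by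
  ext x y
  rw [aux_N]
  simp only [Matrix.add_apply, Matrix.smul_apply, distM, Matrix.of_apply, smul_eq_mul,
    Matrix.one_apply, ← hG.1.dist_eq_zero_iff]
  have hle := hG.2.1 x y
  obtain h | h | h | h : G.dist x y = 0 ∨ G.dist x y = 1 ∨ G.dist x y = 2 ∨ G.dist x y = 3 := by
    omega
  · have := (hG.2.2.2.2 0 (by norm_num) x y h).2
    simp only [zero_add] at this
    rw [this]
    simp [h]
  · have := aux_a G b c hG x y 1 h le_rfl
    rw [this]
    simp [h]
  · have := (hG.2.2.2.2 2 (by norm_num) x y h).1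
    simp only [Nat.add_one_sub_one] at this
    rw [this]
    simp [h]
  · have := aux_far G hG.1 x y 1 (by omega)
    rw [this]
    simp [h]

theorem aux_I4 (G : SimpleGraph V) (b c : ℕ → ℕ) (hG : IsDRG G 3 b c) :
    distM G 3 * distM G 1 = (b 2 : ℝ) • distM G 2 + aInt b c 3 • distM G 3 := by
  ext x y
  rw [aux_N]
  simp only [Matrix.add_apply, Matrix.smul_apply, distM, Matrix.of_apply, smul_eq_mul]
  have hle := hG.2.1 x y
  obtain h | h | h | h : G.dist x y = 0 ∨ G.dist x y = 1 ∨ G.dist x y = 2 ∨ G.dist x y = 3 := by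
    omega
  · have := aux_far G hG.1 x y 3 (by omega)
    rw [this]
    simp [h]
  · have := aux_far G hG.1 x y 3 (by omega)
    rw [this]
    simp [h]
  · have := (hG.2.2.2.2 2 (by norm_num) x y h).2
    simp only [Nat.reduceAdd] at this
    rw [this]
    simp [h]
  · have := aux_a G b c hG x y 3 h (by norm_num)
    rw [this]
    simp [h]

theorem aux_J (G : SimpleGraph V) (b c : ℕ → ℕ) (hG : IsDRG G 3 b c) (v : V → ℝ) (x : V) :
    v x + (distM G 1 *ᵥ v) x + (distM G 2 *ᵥ v) x + (distM G 3 *ᵥ v) x = ∑ y, v y := by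
  have e : v x = ((1 : Matrix V V ℝ) *ᵥ v) x := by simp
  rw [e, ← Pi.add_apply, ← Pi.add_apply, ← Pi.add_apply, ← Matrix.add_mulVec,
    ← Matrix.add_mulVec, ← Matrix.add_mulVec]
  simp only [mulVec, dotProduct]
  refine Finset.sum_congr rfl fun y _ => ?_
  simp only [Matrix.add_apply, distM, Matrix.of_apply, Matrix.one_apply,
    ← hG.1.dist_eq_zero_iff]
  have hle := hG.2.1 x y
  obtain h | h | h | h : G.dist x y = 0 ∨ G.dist x y = 1 ∨ G.dist x y = 2 ∨ G.dist x y = 3 := by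
    omega
  all_goals simp [h]

theorem aux_symm (G : SimpleGraph V) (i : ℕ) : (distM G i)ᵀ = distM G i := by
  ext x y
  simp [distM, SimpleGraph.dist_comm]

theorem aux_rowsum (G : SimpleGraph V) (b c : ℕ → ℕ) (hG : IsDRG G 3 b c) (x : V) :
    ∑ y, distM G 1 x y = (b 0 : ℝ) := by
  classical
  rw [← aux_deg G b c hG x, Set.ncard_eq_toFinset_card', Finset.card_eq_sum_ones, Nat.cast_sum,
    Set.toFinset_ofPred, Finset.sum_filter]
  refine Finset.sum_congr rfl fun z _ => ?_
  simp [distM]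

theorem aux_qDist (G : SimpleGraph V) (q : ℝ) :
    qDist G 3 q = distM G 1 + (1 + 1 / q) • distM G 2 + (1 + 1 / q + (1 / q) ^ 2) • distM G 3 := by
  rw [qDist, show Finset.Icc 1 3 = {1, 2, 3} from rfl]
  simp [Finset.sum_range_succ, add_assoc]

theorem aux_sum0 (G : SimpleGraph V) (b c : ℕ → ℕ) (hG : IsDRG G 3 b c) (v : V → ℝ) (θ : ℝ)
    (hθ : θ ≠ b 0) (hv : distM G 1 *ᵥ v = θ • v) : ∑ y, v y = 0 := by
  have e : ∑ x, (distM G 1 *ᵥ v) x = (b 0 : ℝ) * ∑ y, v y := by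
    simp only [mulVec, dotProduct]
    rw [Finset.sum_comm, Finset.mul_sum]
    refine Finset.sum_congr rfl fun y _ => ?_
    rw [← Finset.sum_mul, ← aux_rowsum G b c hG y]
    congr 1
    refine Finset.sum_congr rfl fun x _ => ?_
    conv_lhs => rw [← aux_symm]
    rfl
  rw [hv] at e
  simp only [Pi.smul_apply, smul_eq_mul, ← Finset.mul_sum] at e
  have : (θ - b 0) * ∑ y, v y = 0 := by linear_combination e
  exact (mul_eq_zero.1 this).resolve_left (sub_ne_zero.2 hθ)

theorem aux_A2 (G : SimpleGraph V) (b c : ℕ → ℕ) (hG : IsDRG G 3 b c) (v : V → ℝ) (θ : ℝ)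
    (hv : distM G 1 *ᵥ v = θ • v) (x : V) :
    (c 2 : ℝ) * (distM G 2 *ᵥ v) x = (θ ^ 2 - aInt b c 1 * θ - b 0) * v x := by
  have e := congrFun (congrArg (fun M => M *ᵥ v) (aux_I3 G b c hG)) x
  simp only [← Matrix.mulVec_mulVec, hv, Matrix.mulVec_smul, Matrix.add_mulVec,
    Matrix.smul_mulVec, Matrix.one_mulVec, Pi.add_apply, Pi.smul_apply, smul_eq_mul] at e
  linear_combination -e

theorem aux_A3 (G : SimpleGraph V) (b c : ℕ → ℕ) (hG : IsDRG G 3 b c) (v : V → ℝ) (θ : ℝ)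
    (hv : distM G 1 *ᵥ v = θ • v) (x : V) :
    θ * (distM G 3 *ᵥ v) x = b 2 * (distM G 2 *ᵥ v) x + aInt b c 3 * (distM G 3 *ᵥ v) x := by
  have e := congrFun (congrArg (fun M => M *ᵥ v) (aux_I4 G b c hG)) x
  simp only [← Matrix.mulVec_mulVec, hv, Matrix.mulVec_smul, Matrix.add_mulVec,
    Matrix.smul_mulVec, Pi.add_apply, Pi.smul_apply, smul_eq_mul] at e
  exact e

theorem aux_cubic (G : SimpleGraph V) (b c : ℕ → ℕ) (hG : IsDRG G 3 b c) (v : V → ℝ) (θ : ℝ)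
    (hθ : θ ≠ b 0) (hv0 : v ≠ 0) (hv : distM G 1 *ᵥ v = θ • v) :
    (θ + b 2 - aInt b c 3) * (θ ^ 2 - aInt b c 1 * θ - b 0 + c 2 * (1 + θ))
      = c 2 * b 2 * (1 + θ) ∧ ((c 2 : ℝ) = 0 → θ ^ 2 - aInt b c 1 * θ - b 0 = 0) := by
  obtain ⟨x, hx⟩ := Function.ne_iff.1 hv0
  have hx' : v x ≠ 0 := hx
  have e0 := aux_sum0 G b c hG v θ hθ hv
  have e1 := aux_J G b c hG v x
  have e2 := aux_A2 G b c hG v θ hv x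
  have e3 := aux_A3 G b c hG v θ hv x
  rw [e0, hv, Pi.smul_apply, smul_eq_mul] at e1
  constructor
  · apply mul_right_cancel₀ hx'
    linear_combination (c 2 : ℝ) * (θ + b 2 - aInt b c 3) * e1 - (c 2 : ℝ) * e3
      - (θ + b 2 - aInt b c 3) * e2 - (c 2 : ℝ) * (b 2) * e1
  · intro h
    rw [h, zero_mul] at e2
    exact (mul_eq_zero.1 e2.symm).resolve_right hx'

theorem aux_alg (a1 a3 k b2 c2 t1 t2 t3 : ℝ) (h12 : t1 ≠ t2) (h13 : t1 ≠ t3) (h23 : t2 ≠ t3)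
    (e : ∀ t, t = t1 ∨ t = t2 ∨ t = t3 →
      (t + b2 - a3) * (t ^ 2 - a1 * t - k + c2 * (1 + t)) = c2 * b2 * (1 + t)) :
    t1 + t2 + t3 = a1 + a3 - b2 - c2 := by
  have e1 := e t1 (by simp)
  have e2 := e t2 (by simp)
  have e3 := e t3 (by simp)
  have h := mul_ne_zero (mul_ne_zero (sub_ne_zero.2 h12) (sub_ne_zero.2 h13)) (sub_ne_zero.2 h23)
  apply mul_left_cancel₀ h
  linear_combination (t2 - t3) * e1 - (t1 - t3) * e2 + (t1 - t2) * e3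

theorem aux_dist (a1 a3 k b2 c2 t1 t2 t3 q : ℝ) (hq0 : q ≠ 0) (hc : c2 ≠ 0) (h12 : t1 ≠ t2)
    (hs : t1 + t2 + t3 = a1 + a3 - b2 - c2) (hq : q ≠ (t3 - a3 + b2) / c2) (f : ℝ → ℝ)
    (hf : f = fun t => -1 - 1 / q * (1 + t)
      + (1 / q) ^ 2 * (-(1 + t) - (t ^ 2 - a1 * t - k) / c2)) : f t1 ≠ f t2 := by
  intro h
  apply hq
  rw [hf] at h
  field_simp at h ⊢
  have h' : (t1 - t2) * (q * c2 - (t3 - a3 + b2)) = 0 := by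
    have ht3 : t3 = a1 + a3 - b2 - c2 - t1 - t2 := by linear_combination hs
    subst ht3
    linear_combination -h
  have := (mul_eq_zero.1 h').resolve_left (sub_ne_zero.2 h12)
  linarith

/-- Corollary 3.6(i): for a distance-regular graph of diameter 3 with
intersection array `{k, b₁, b₂; 1, c₂, c₃}`, distinct adjacency eigenvalues
`k > θ₁ > θ₂ > θ₃`, and a real `q` with `q ∉ {q₁, q₂, q₃}` (where
`q_l = (θ_l − a₃ + b₂)/c₂`) and `q > 0` or `q ≤ −1`, the matrix `𝔻_q` has exactly four
distinct eigenvalues. -/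
theorem stmt8 (G : SimpleGraph V) (b c : ℕ → ℕ) (hG : IsDRG G 3 b c)
    (θ₁ θ₂ θ₃ : ℝ) (h1 : (b 0 : ℝ) > θ₁) (h2 : θ₁ > θ₂) (h3 : θ₂ > θ₃)
    (hspec : spectrum ℝ (distM G 1) = ({(b 0 : ℝ), θ₁, θ₂, θ₃} : Set ℝ))
    (q : ℝ)
    (hq : q ∉ ({(θ₁ - aInt b c 3 + (b 2 : ℝ)) / (c 2 : ℝ),
                (θ₂ - aInt b c 3 + (b 2 : ℝ)) / (c 2 : ℝ),
                (θ₃ - aInt b c 3 + (b 2 : ℝ)) / (c 2 : ℝ)} : Set ℝ))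
    (hq' : 0 < q ∨ q ≤ -1) :
    (spectrum ℝ (qDist G 3 q)).ncard = 4 := by
  classical
  obtain ⟨hq1, hq2, hq3⟩ : q ≠ (θ₁ - aInt b c 3 + (b 2 : ℝ)) / (c 2 : ℝ) ∧
      q ≠ (θ₂ - aInt b c 3 + (b 2 : ℝ)) / (c 2 : ℝ) ∧
      q ≠ (θ₃ - aInt b c 3 + (b 2 : ℝ)) / (c 2 : ℝ) := by
    simpa [not_or] using hq
  have hq0 : q ≠ 0 := by
    rcases hq' with h | h <;> intro h0 <;> linarith
  have mem : ∀ t : ℝ, t = θ₁ ∨ t = θ₂ ∨ t = θ₃ →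
      t ≠ b 0 ∧ ∃ v : V → ℝ, v ≠ 0 ∧ distM G 1 *ᵥ v = t • v := by
    intro t ht
    refine ⟨?_, (aux_mem_spec _ _).1 ?_⟩
    · rcases ht with rfl | rfl | rfl <;> apply ne_of_lt <;> linarith
    · rw [hspec]
      simp only [Set.mem_insert_iff, Set.mem_singleton_iff]
      tauto
  have cub : ∀ t : ℝ, t = θ₁ ∨ t = θ₂ ∨ t = θ₃ →
      (t + b 2 - aInt b c 3) * (t ^ 2 - aInt b c 1 * t - b 0 + c 2 * (1 + t))
      = c 2 * b 2 * (1 + t) ∧ ((c 2 : ℝ) = 0 → t ^ 2 - aInt b c 1 * t - b 0 = 0) := by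
    intro t ht
    obtain ⟨hk, v, hv0, hv⟩ := mem t ht
    exact aux_cubic G b c hG v t hk hv0 hv
  have hc2 : (c 2 : ℝ) ≠ 0 := by
    intro h
    have e1 := (cub θ₁ (by simp)).2 h
    have e2 := (cub θ₂ (by simp)).2 h
    have e3 := (cub θ₃ (by simp)).2 h
    have f1 : θ₁ + θ₂ - aInt b c 1 = 0 := by
      apply mul_left_cancel₀ (sub_ne_zero.2 h2.ne')
      linear_combination e1 - e2
    have f2 : θ₂ + θ₃ - aInt b c 1 = 0 := by
      apply mul_left_cancel₀ (sub_ne_zero.2 h3.ne')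
      linear_combination e2 - e3
    linarith
  have hs := aux_alg _ _ _ _ _ θ₁ θ₂ θ₃ h2.ne' (h3.trans h2).ne' h3.ne' fun t ht => (cub t ht).1
  obtain ⟨f, hf⟩ : ∃ f : ℝ → ℝ, f = fun t => -1 - 1 / q * (1 + t)
      + (1 / q) ^ 2 * (-(1 + t) - (t ^ 2 - aInt b c 1 * t - b 0) / c 2) := ⟨_, rfl⟩
  have d12 := aux_dist _ _ _ _ _ θ₁ θ₂ θ₃ q hq0 hc2 h2.ne' hs hq3 f hf
  have d13 := aux_dist _ _ _ _ _ θ₁ θ₃ θ₂ q hq0 hc2 (h3.trans h2).ne'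
    (by linear_combination hs) hq2 f hf
  have d23 := aux_dist _ _ _ _ _ θ₂ θ₃ θ₁ q hq0 hc2 h3.ne'
    (by linear_combination hs) hq1 f hf
  have Dv : ∀ (v : V → ℝ) (x : V), (qDist G 3 q *ᵥ v) x = (distM G 1 *ᵥ v) x
      + (1 + 1 / q) * (distM G 2 *ᵥ v) x
      + (1 + 1 / q + (1 / q) ^ 2) * (distM G 3 *ᵥ v) x := by
    intro v x
    simp only [aux_qDist, Matrix.add_mulVec, Matrix.smul_mulVec, Pi.add_apply, Pi.smul_apply,
      smul_eq_mul]
  have Deig : ∀ (v : V → ℝ) (t : ℝ), t ≠ b 0 → distM G 1 *ᵥ v = t • v →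
      qDist G 3 q *ᵥ v = f t • v := by
    intro v t ht hv
    funext x
    have e0 := aux_sum0 G b c hG v t ht hv
    have e1 := aux_J G b c hG v x
    have e2 := aux_A2 G b c hG v t hv x
    rw [Dv]
    rw [e0, hv, Pi.smul_apply, smul_eq_mul] at e1
    rw [hv, Pi.smul_apply, Pi.smul_apply, smul_eq_mul, smul_eq_mul]
    have e3 : (distM G 2 *ᵥ v) x = (t ^ 2 - aInt b c 1 * t - b 0) / c 2 * v x := by
      field_simp
      linear_combination e2
    have e4 : (distM G 3 *ᵥ v) x = -(v x + t * v x + (distM G 2 *ᵥ v) x) := by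
      linear_combination e1
    rw [e4, e3, hf]
    ring
  have one_eig : distM G 1 *ᵥ (fun _ => 1 : V → ℝ) = (b 0 : ℝ) • (fun _ => 1 : V → ℝ) := by
    funext x
    simp [mulVec, dotProduct, aux_rowsum G b c hG x]
  obtain ⟨S, hS⟩ : ∃ S : ℝ, ∀ x, ∑ y, qDist G 3 q x y = S := by
    obtain ⟨m, hm⟩ : ∃ m : ℝ, m = (((b 0 : ℝ) ^ 2 - aInt b c 1 * b 0 - b 0) / c 2) := ⟨_, rfl⟩
    refine ⟨b 0 + (1 + 1 / q) * m + (1 + 1 / q + (1 / q) ^ 2) *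
      (Fintype.card V - 1 - b 0 - m), fun x => ?_⟩
    have e := Dv (fun _ => 1) x
    have e1 := aux_J G b c hG (fun _ => 1) x
    have e2 := aux_A2 G b c hG (fun _ => 1) _ one_eig x
    have e3 : (distM G 2 *ᵥ (fun _ => 1 : V → ℝ)) x = m := by
      rw [hm]
      field_simp
      linear_combination e2
    rw [one_eig, e3] at e1
    simp only [Pi.smul_apply, smul_eq_mul, mul_one, Finset.sum_const, Finset.card_univ,
      nsmul_eq_mul] at e1
    have e4 : (distM G 3 *ᵥ (fun _ => 1 : V → ℝ)) x = Fintype.card V - 1 - b 0 - m := by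
      linear_combination e1
    rw [e3, e4, one_eig] at e
    simpa [mulVec, dotProduct] using e
  have Dentry : ∀ x y, qDist G 3 q x y = (if G.dist x y = 1 then 1 else 0)
      + (1 + 1 / q) * (if G.dist x y = 2 then 1 else 0)
      + (1 + 1 / q + (1 / q) ^ 2) * (if G.dist x y = 3 then 1 else 0) := by
    intro x y
    rw [aux_qDist]
    simp only [distM, Matrix.add_apply, Matrix.smul_apply, Matrix.of_apply, smul_eq_mul]
  have hr1 : 0 ≤ 1 + 1 / q := by
    rcases hq' with h | h
    · positivity
    · have : -1 ≤ 1 / q := by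
        rw [le_div_iff_of_neg (by linarith)]
        linarith
      linarith
  have hr2 : 0 ≤ 1 + 1 / q + (1 / q) ^ 2 := by positivity
  have Dconst : ∀ v : V → ℝ, qDist G 3 q *ᵥ v = S • v → ∀ x y, v x = v y := by
    refine aux_const G hG.1 _ S (fun x y => ?_) (fun x y hxy => ?_) hS
    · rw [Dentry]
      have h01 : ∀ p : Prop, [Decidable p] → (0 : ℝ) ≤ if p then 1 else 0 := by
        intro p _
        split_ifs <;> norm_num
      exact add_nonneg (add_nonneg (h01 _) (mul_nonneg hr1 (h01 _))) (mul_nonneg hr2 (h01 _))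
    · rw [Dentry, SimpleGraph.dist_eq_one_iff_adj.2 hxy]
      norm_num
  have Aconst : ∀ v : V → ℝ, distM G 1 *ᵥ v = (b 0 : ℝ) • v → ∀ x y, v x = v y := by
    refine aux_const G hG.1 _ _ (fun x y => ?_) (fun x y hxy => ?_) (aux_rowsum G b c hG)
    · simp only [distM, Matrix.of_apply]
      split_ifs <;> norm_num
    · simp only [distM, Matrix.of_apply, SimpleGraph.dist_eq_one_iff_adj.2 hxy]
      norm_num
  have const_eig : ∀ v : V → ℝ, (∀ x y, v x = v y) → ∀ (M : Matrix V V ℝ) (s : ℝ),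
      (∀ x, ∑ y, M x y = s) → M *ᵥ v = s • v := by
    intro v hv M s hM
    funext x
    simp only [mulVec, dotProduct, Pi.smul_apply, smul_eq_mul]
    rw [← hM x, Finset.sum_mul]
    exact Finset.sum_congr rfl fun y _ => by rw [hv x y]
  have dS : ∀ t : ℝ, t = θ₁ ∨ t = θ₂ ∨ t = θ₃ → S ≠ f t := by
    intro t ht hSt
    obtain ⟨hk, v, hv0, hv⟩ := mem t ht
    have e1 := Deig v t hk hv
    rw [← hSt] at e1
    have e2 := const_eig v (Dconst v e1) _ _ (aux_rowsum G b c hG)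
    rw [hv] at e2
    exact hk (smul_left_injective ℝ hv0 e2)
  have hspecD : spectrum ℝ (qDist G 3 q) = {S, f θ₁, f θ₂, f θ₃} := by
    apply Set.Subset.antisymm
    · refine aux_subset (distM G 1) _ ?_ ?_ _ ?_
      · rw [Matrix.IsHermitian, Matrix.conjTranspose_eq_transpose_of_trivial, aux_symm]
      · simp only [aux_qDist, Matrix.transpose_add, Matrix.transpose_smul, aux_symm]
      · intro v t hv0 hv
        have ht : t ∈ spectrum ℝ (distM G 1) := (aux_mem_spec _ _).2 ⟨v, hv0, hv⟩
        rw [hspec] at ht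
        simp only [Set.mem_insert_iff, Set.mem_singleton_iff] at ht
        rcases ht with ht | ht
        · subst ht
          exact ⟨S, by simp, const_eig v (Aconst v hv) _ _ hS⟩
        · refine ⟨f t, ?_, Deig v t (mem t ht).1 hv⟩
          rcases ht with rfl | rfl | rfl <;> simp
    · have hf' : ∀ t : ℝ, t = θ₁ ∨ t = θ₂ ∨ t = θ₃ → f t ∈ spectrum ℝ (qDist G 3 q) := by
        intro t ht
        obtain ⟨hk, v, hv0, hv⟩ := mem t ht
        exact (aux_mem_spec _ _).2 ⟨v, hv0, Deig v t hk hv⟩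
      rintro μ (rfl | rfl | rfl | rfl)
      · refine (aux_mem_spec _ _).2 ⟨fun _ => 1, ?_, const_eig _ (fun _ _ => rfl) _ _ hS⟩
        obtain ⟨x⟩ := hG.1.nonempty
        intro h
        simpa using congrFun h x
      · exact hf' _ (by simp)
      · exact hf' _ (by simp)
      · exact hf' _ (by simp)
  have s1 := dS θ₁ (by simp)
  have s2 := dS θ₂ (by simp)
  have s3 := dS θ₃ (by simp)
  rw [hspecD, Set.ncard_insert_of_notMem (by simp [s1, s2, s3]),
    Set.ncard_insert_of_notMem (by simp [d12, d13]), Set.ncard_pair d23]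
end

section
/- Let G be a bipartite distance-regular graph of diameter 3 with intersection array {k, k−1, k−c₂; 1, c₂, k}, and let q be a real number with q > 0 or q ≤ −1. Then the q-distance matrix 𝔻_q has exactly three distinct eigenvalues if and only if q = (k + θ)/c₂ − 1 for some θ ∈ {√(k−c₂), −√(k−c₂), −k}. -/
open Matrix

variable {V : Type*} [Fintype V] [DecidableEq V]

/-- `G` is bipartite: the vertex set can be split into two parts such that every edge has
one endpoint in each part. -/
def IsBipartiteGraph (G : SimpleGraph V) : Prop :=
  ∃ S : Set V, ∀ x y : V, G.Adj x y → (x ∈ S ↔ y ∉ S)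


theorem aux_step (G : SimpleGraph V) (hc : G.Connected) (x y : V) (n : ℕ)
    (h : G.dist x y = n + 1) : ∃ z, G.Adj y z ∧ G.dist x z = n := by
  obtain ⟨p, hp⟩ := hc.exists_walk_length_eq_dist y x
  rw [SimpleGraph.dist_comm, h] at hp
  cases p with
  | nil => simp at hp
  | cons ha p =>
    rename_i z
    refine ⟨z, ha, ?_⟩
    simp at hp
    have h1 := SimpleGraph.dist_le p
    have h2 := hc.dist_triangle (u := x) (v := z) (w := y)
    have h3 : G.dist z y = 1 := SimpleGraph.dist_eq_one_iff_adj.2 ha.symm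
    rw [SimpleGraph.dist_comm] at h1
    omega

theorem aux_par (G : SimpleGraph V) (S : Set V)
    (hS : ∀ x y : V, G.Adj x y → (x ∈ S ↔ y ∉ S)) {x y : V} (p : G.Walk x y) :
    ((x ∈ S) ↔ (y ∈ S)) ↔ Even p.length := by
  induction p with
  | nil => simp
  | cons h p ih =>
    have := hS _ _ h
    rw [SimpleGraph.Walk.length_cons, Nat.even_add_one, ← ih]
    tauto

theorem aux_ne (G : SimpleGraph V) (hc : G.Connected) (hb : IsBipartiteGraph G)
    (x y z : V) (h : G.Adj y z) : G.dist x y ≠ G.dist x z := by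
  obtain ⟨S, hS⟩ := hb
  obtain ⟨p, hp⟩ := hc.exists_walk_length_eq_dist x y
  obtain ⟨p', hp'⟩ := hc.exists_walk_length_eq_dist x z
  have h1 := aux_par G S hS p
  have h2 := aux_par G S hS p'
  have h3 := hS _ _ h
  intro he
  rw [hp, he, ← hp', ← h2] at h1
  tauto

theorem aux_mul (G : SimpleGraph V) (i : ℕ) (x y : V) :
    (distM G i * distM G 1) x y = (({z : V | G.Adj y z ∧ G.dist x z = i} : Set V).ncard : ℝ) := by
  classical
  rw [Set.ncard_eq_toFinset_card', Matrix.mul_apply]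
  simp only [distM, Matrix.of_apply, SimpleGraph.dist_eq_one_iff_adj, ← ite_and, mul_ite, mul_one,
    mul_zero]
  rw [Finset.sum_boole]
  congr 2
  ext z
  simp [SimpleGraph.adj_comm]

theorem aux_zero (G : SimpleGraph V) (hc : G.Connected) (hb : IsBipartiteGraph G) (i : ℕ) (x y : V)
    (h : i + 1 ≠ G.dist x y) (h' : i ≠ G.dist x y + 1) :
    ({z : V | G.Adj y z ∧ G.dist x z = i} : Set V).ncard = 0 := by
  rw [Set.ncard_eq_zero, Set.eq_empty_iff_forall_notMem]
  rintro z ⟨hz, hd⟩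
  have h1 := aux_ne G hc hb x y z hz
  have h2 := hc.dist_triangle (u := x) (v := z) (w := y)
  have h4 := hc.dist_triangle (u := x) (v := y) (w := z)
  have h3 : G.dist z y = 1 := SimpleGraph.dist_eq_one_iff_adj.2 hz.symm
  have h5 : G.dist y z = 1 := SimpleGraph.dist_eq_one_iff_adj.2 hz
  omega

theorem aux_table (G : SimpleGraph V) (k c₂ : ℕ) (b c : ℕ → ℕ) (hG : IsDRG G 3 b c)
    (hbip : IsBipartiteGraph G)
    (hb0 : b 0 = k) (hb1 : b 1 = k - 1) (hb2 : b 2 = k - c₂)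
    (hc2 : c 2 = c₂) (hc3 : c 3 = k) :
    0 < c₂ ∧ c₂ < k ∧
    distM G 1 * distM G 1 = (k : ℝ) • 1 + (c₂ : ℝ) • distM G 2 ∧
    distM G 2 * distM G 1 = ((k : ℝ) - 1) • distM G 1 + (k : ℝ) • distM G 3 ∧
    distM G 3 * distM G 1 = ((k : ℝ) - c₂) • distM G 2 := by
  obtain ⟨hc, hD, ⟨x, y, hxy⟩, -, h⟩ := hG
  have key : 0 < c₂ ∧ c₂ < k := by
    obtain ⟨z, hz, hxz⟩ := aux_step G hc x y 2 hxy
    obtain ⟨w, hw, hxw⟩ := aux_step G hc x z 1 hxz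
    obtain ⟨h1, h2⟩ := h 2 (by norm_num) x z hxz
    have e1 : 0 < c 2 := by
      rw [← h1, Set.ncard_pos]; exact ⟨w, hw, hxw⟩
    have e2 : 0 < b 2 := by
      rw [← h2, Set.ncard_pos]; exact ⟨y, hz.symm, hxy⟩
    omega
  refine ⟨key.1, key.2, ?_, ?_, ?_⟩
  all_goals
    ext u v
    rw [aux_mul]
    have hle := hD u v
    have hh := h _ hle u v rfl
    have hz := fun i => aux_zero G hc hbip i u v
    have h0 : u = v ↔ G.dist u v = 0 := (hc.dist_eq_zero_iff).symm
    simp only [distM, Matrix.add_apply, Matrix.smul_apply, Matrix.of_apply, Matrix.one_apply, h0]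
    generalize G.dist u v = d at *
    interval_cases d <;> norm_num at hh hz ⊢
  all_goals
    have hz1 := hz 1
    have hz2 := hz 2
    have hz3 := hz 3
    simp only [SimpleGraph.dist_eq_one_iff_adj] at hz1
    first
      | omega
      | (rw [hh.2, hb1, Nat.cast_sub (by omega)]; simp)
      | (rw [hh.2, hb2, Nat.cast_sub (by omega)])

theorem aux_spec (D : Matrix V V ℝ) (l : Fin 4 → ℝ) (E : Fin 4 → Matrix V V ℝ)
    (h1 : ∑ i, E i = 1) (h2 : ∀ i, D * E i = l i • E i) (h3 : ∀ i, E i ≠ 0) :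
    spectrum ℝ D = Set.range l := by
  ext μ
  constructor
  · intro h
    by_contra hn
    apply h
    have hne : ∀ i, μ - l i ≠ 0 := fun i hi => hn ⟨i, by linarith⟩
    have : (algebraMap ℝ _ μ - D) * (∑ i, (μ - l i)⁻¹ • E i) = 1 := by
      rw [Finset.mul_sum, ← h1]
      refine Finset.sum_congr rfl fun i _ => ?_
      rw [mul_smul_comm, sub_mul, h2, Algebra.algebraMap_eq_smul_one, smul_mul_assoc, one_mul,
        ← sub_smul, smul_smul, inv_mul_cancel₀ (hne i), one_smul]
    exact IsUnit.of_mul_eq_one _ this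
  · rintro ⟨i, rfl⟩ h
    apply h3 i
    have : (algebraMap ℝ _ (l i) - D) * E i = 0 := by
      rw [sub_mul, h2, Algebra.algebraMap_eq_smul_one, smul_mul_assoc, one_mul, sub_self]
    exact (h.mul_right_eq_zero).1 this

theorem aux_card (a b c d : ℝ) (h1 : a ≠ b) (h2 : a ≠ c) (h3 : a ≠ d) :
    (Set.range ![a, b, c, d]).ncard = 3 ↔
      (c = d ∧ b ≠ c) ∨ (c ≠ d ∧ (b = c ∨ b = d)) := by
  have : Set.range ![a, b, c, d] = ((({a, b, c, d} : Finset ℝ)) : Set ℝ) := by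
    ext x; simp [Matrix.range_cons]; try tauto
  rw [this, Set.ncard_coe_finset]
  by_cases e1 : c = d <;> by_cases e2 : b = c <;> by_cases e3 : b = d <;>
    simp_all [Finset.card_insert_of_notMem]

theorem aux_alg_s12 (A J K D : Matrix V V ℝ) (k c s m t : ℝ) (hs : 0 < s) (hm : 0 < m)
    (hmc : m * c = k ^ 2 - s ^ 2)
    (AA : A * A = s ^ 2 • 1 + c • J) (AJ : A * J = k • K) (AK : A * K = k • J)
    (JA : J * A = k • K) (KA : K * A = k • J)
    (JJ : J * J = m • J) (JK : J * K = m • K) (KJ : K * J = m • K) (KK : K * K = m • J)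
    (hD : D = (-(t + t ^ 2)) • A + (1 + t) • (J - 1) + (1 + t + t ^ 2) • K)
    (hne : ∀ α β γ δ : ℝ, α + β ≠ 0 → α • (1 : Matrix V V ℝ) + β • J + γ • K + δ • A ≠ 0)
    (hm1 : 1 < m) :
    spectrum ℝ D = Set.range ![-(t + t^2) * k + (1 + t) * (m - 1) + (1 + t + t^2) * m,
      (t + t^2) * k + (1 + t) * (m - 1) - (1 + t + t^2) * m,
      -(t + t^2) * s - (1 + t), (t + t^2) * s - (1 + t)] := by
  have hi : 0 < m⁻¹ := by positivity
  have hi1 : m⁻¹ < 1 := inv_lt_one_of_one_lt₀ hm1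
  have hc : c = (k ^ 2 - s ^ 2) * m⁻¹ := by field_simp; linarith
  apply aux_spec D _ ![(0:ℝ) • 1 + (m⁻¹ / 2) • J + (m⁻¹ / 2) • K + (0:ℝ) • A,
    (0:ℝ) • 1 + (m⁻¹ / 2) • J + (-m⁻¹ / 2) • K + (0:ℝ) • A,
    (1 / 2 : ℝ) • 1 + (-m⁻¹ / 2) • J + (-k * m⁻¹ / (2 * s)) • K + (1 / (2 * s)) • A,
    (1 / 2 : ℝ) • 1 + (-m⁻¹ / 2) • J + (k * m⁻¹ / (2 * s)) • K + (-1 / (2 * s)) • A]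
  · simp only [Fin.sum_univ_four, Matrix.cons_val]
    module
  · intro i
    rw [hD]
    fin_cases i <;>
    simp only [Fin.zero_eta, Fin.mk_one, Fin.reduceFinMk, Matrix.cons_val, mul_add, add_mul, sub_mul, mul_sub, smul_mul_assoc, mul_smul_comm, AA, AJ, AK, JA, KA, JJ, JK, KJ, KK,
      one_mul, mul_one, hc] <;>
    match_scalars <;> field_simp <;> ring
  · intro i
    fin_cases i <;> simp only [Fin.zero_eta, Fin.mk_one, Fin.reduceFinMk, Matrix.cons_val] <;> apply hne <;> 
      first | positivity | (intro h; linarith)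

theorem aux_num (k c s m q : ℝ) (hc : 1 ≤ c) (hk : c + 1 ≤ k) (hs : 0 < s) (hs2 : s ^ 2 = k - c)
    (hmc : m * c = k ^ 2 - s ^ 2) (hs1 : 1 ≤ s) (hq : 0 < q ∨ q ≤ -1) :
    (Set.range ![-(1 / q + (1 / q)^2) * k + (1 + 1 / q) * (m - 1) + (1 + 1 / q + (1 / q)^2) * m,
      (1 / q + (1 / q)^2) * k + (1 + 1 / q) * (m - 1) - (1 + 1 / q + (1 / q)^2) * m,
      -(1 / q + (1 / q)^2) * s - (1 + 1 / q), (1 / q + (1 / q)^2) * s - (1 + 1 / q)]).ncard = 3 ↔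
      ∃ θ ∈ ({s, -s, -k} : Set ℝ), q = (k + θ) / c - 1 := by
  have hq0 : q ≠ 0 := by rintro rfl; norm_num at hq
  have htq : 1 / q * q = 1 := by field_simp
  have ht : 0 < 1 / q ∨ (1 / q < 0 ∧ -1 ≤ 1 / q) := by
    rcases hq with h | h
    · left; positivity
    · right
      have : 1 / q < 0 := by apply div_neg_of_pos_of_neg <;> linarith
      exact ⟨this, by nlinarith⟩
  generalize 1 / q = t at *
  have hsk : s < k := by nlinarith
  have hmks : k + s ≤ m := by
    have : (k + s) * c ≤ m * c := by rw [hmc]; nlinarith [mul_nonneg hs.le (sub_nonneg.2 hs1)]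
    exact le_of_mul_le_mul_right this (by linarith)
  have ht0 : t ≠ 0 := by rintro rfl; norm_num at ht
  have hB : ∀ w, 0 < w → w ≤ m → 0 < m * (1 + (1 + t) ^ 2) - (t + t ^ 2) * w := by
    intro w h0 hw
    rcases ht with h | ⟨h, h'⟩
    · nlinarith [mul_le_mul_of_nonneg_left hw (by positivity : 0 ≤ t + t ^ 2)]
    · have : 0 ≤ -(t + t ^ 2) := by nlinarith
      have h2 : 0 < m * (1 + (1 + t) ^ 2) := by
        have : 0 < m := by linarith
        positivity
      nlinarith [mul_nonneg this h0.le]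
  have hC : 0 < (1 + t + t ^ 2) * m - (t + t ^ 2) * k := by
    have h2 : 0 < 1 + t + t ^ 2 := by nlinarith [sq_nonneg (2 * t + 1)]
    nlinarith [mul_pos h2 (by linarith : 0 < m - k)]
  rw [aux_card]
  rotate_left
  · intro h; linarith
  · intro h; have := hB (k - s) (by linarith) (by linarith); linarith
  · intro h; have := hB (k + s) (by linarith) (by linarith); linarith
  have hfac : ∀ θ, θ ^ 2 = s ^ 2 → -k < θ → (((t + t^2) * k + (1 + t) * (m - 1) - (1 + t + t^2) * m =
      -(t + t^2) * θ - (1 + t)) ↔ q = (k + -θ) / c - 1) := by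
    intro θ h1 h2
    have hpos : k + θ ≠ 0 := by linarith
    have hc0 : c ≠ 0 := by linarith
    have e1 : ((t + t^2) * k + (1 + t) * (m - 1) - (1 + t + t^2) * m - (-(t + t^2) * θ - (1 + t))) * (q ^ 2 * c)
      = (k + θ) * ((q + 1) * c - (k - θ)) := by
      have : t = 1 / q := by field_simp; linarith
      subst this
      have : m = (k ^ 2 - θ ^ 2) / c := by rw [h1]; field_simp; linarith
      subst this
      field_simp
      ring
    have e0 : q = (k + -θ) / c - 1 ↔ (q + 1) * c - (k + -θ) = 0 := by
      rw [eq_sub_iff_add_eq, eq_div_iff hc0, sub_eq_zero]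
    rw [e0, ← sub_eq_zero]
    have hqc : q ^ 2 * c ≠ 0 := by positivity
    constructor
    · intro h
      rw [h, zero_mul] at e1
      have := (mul_eq_zero.1 e1.symm).resolve_left hpos
      linarith
    · intro h
      have h' : (q + 1) * c - (k - θ) = 0 := by linarith
      rw [h', mul_zero] at e1
      exact (mul_eq_zero.1 e1).resolve_right hqc
  have f1 := hfac s rfl (by linarith)
  have f2 := hfac (-s) (by ring) (by linarith)
  rw [neg_neg, neg_mul_neg] at f2
  have hX : (-(t + t^2) * s - (1 + t) = (t + t^2) * s - (1 + t)) ↔ q = -1 := by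
    constructor
    · intro h
      have h3 : t * (1 + t) * s = 0 := by linarith
      have h4 : 1 + t = 0 := by simpa [ht0, hs.ne'] using h3
      have : t = -1 := by linarith
      subst this; linarith
    · rintro rfl
      have : t = -1 := by linarith
      subst this; ring
  rw [f1, f2, Ne, Ne, f1, hX]
  simp only [Set.mem_insert_iff, Set.mem_singleton_iff, exists_eq_or_imp, exists_eq_left]
  have g1 : 0 < (k + s) / c := by apply div_pos <;> linarith
  have g2 : 0 < (k + -s) / c := by apply div_pos <;> linarith
  have g3 : (k + -k) / c - 1 = -1 := by simp
  rw [g3]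
  constructor
  · tauto
  · rintro (h | h | h)
    · right; exact ⟨by intro h'; linarith, Or.inr h⟩
    · right; exact ⟨by intro h'; linarith, Or.inl h⟩
    · left; exact ⟨h, by intro h'; linarith⟩

/-- a bipartite distance-regular graph of diameter 3 with intersection
array `{k, k−1, k−c₂; 1, c₂, k}` and `q > 0` or `q ≤ −1` has exactly three distinct
`q`-distance eigenvalues if and only if `q = (k + θ)/c₂ − 1` for some adjacency eigenvalue
`θ ∈ {√(k−c₂), −√(k−c₂), −k}`. -/
theorem stmt12 (G : SimpleGraph V) (k c₂ : ℕ) (b c : ℕ → ℕ) (hG : IsDRG G 3 b c)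
    (hbip : IsBipartiteGraph G)
    (hb0 : b 0 = k) (hb1 : b 1 = k - 1) (hb2 : b 2 = k - c₂)
    (hc2 : c 2 = c₂) (hc3 : c 3 = k)
    (q : ℝ) (hq : 0 < q ∨ q ≤ -1) :
    (spectrum ℝ (qDist G 3 q)).ncard = 3 ↔
      ∃ θ ∈ ({Real.sqrt ((k : ℝ) - (c₂ : ℝ)), -Real.sqrt ((k : ℝ) - (c₂ : ℝ)),
              -(k : ℝ)} : Set ℝ),
        q = ((k : ℝ) + θ) / (c₂ : ℝ) - 1 := by
  obtain ⟨hc0, hck, T1, T2, T3⟩ := aux_table G k c₂ b c hG hbip hb0 hb1 hb2 hc2 hc3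
  have hc : (1 : ℝ) ≤ c₂ := by exact_mod_cast hc0
  have hk : (c₂ : ℝ) + 1 ≤ k := by exact_mod_cast hck
  set s := Real.sqrt ((k : ℝ) - (c₂ : ℝ)) with hsdef
  have hs2 : s ^ 2 = (k : ℝ) - c₂ := Real.sq_sqrt (by linarith)
  have hs1 : 1 ≤ s := by rw [hsdef, Real.one_le_sqrt]; linarith
  have hs : 0 < s := by linarith
  obtain ⟨m, hmc⟩ : ∃ m : ℝ, m * c₂ = (k : ℝ) ^ 2 - s ^ 2 :=
    ⟨((k : ℝ) ^ 2 - s ^ 2) / c₂, by field_simp⟩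
  rw [← aux_num k c₂ s m q hc hk hs hs2 hmc hs1 hq]
  have hm1 : 1 < m := by
    by_contra hn
    push Not at hn
    nlinarith
  have sym : ∀ i, (distM G i)ᵀ = distM G i := by
    intro i; ext x y; simp [distM, SimpleGraph.dist_comm]
  have hkc : (k : ℝ) ≠ 0 := by linarith
  have hcc : (c₂ : ℝ) ≠ 0 := by linarith
  obtain ⟨A, hA⟩ : ∃ A, A = distM G 1 := ⟨_, rfl⟩
  obtain ⟨J, hJ⟩ : ∃ J, J = 1 + distM G 2 := ⟨_, rfl⟩
  obtain ⟨K, hK⟩ : ∃ K, K = distM G 1 + distM G 3 := ⟨_, rfl⟩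
  have sA : Aᵀ = A := by rw [hA, sym]
  have sJ : Jᵀ = J := by rw [hJ, transpose_add, sym, transpose_one]
  have sK : Kᵀ = K := by rw [hK, transpose_add, sym, sym]
  have AA : A * A = s ^ 2 • 1 + (c₂ : ℝ) • J := by
    rw [hA, T1, hJ, hs2]; module
  have JA : J * A = (k : ℝ) • K := by
    rw [hJ, hA, add_mul, T2, hK, one_mul]; module
  have KA : K * A = (k : ℝ) • J := by
    rw [hK, hA, add_mul, T1, T3, hJ]; module
  have AJ : A * J = (k : ℝ) • K := by
    rw [← sA, ← sJ, ← transpose_mul, JA, transpose_smul, sK]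
  have AK : A * K = (k : ℝ) • J := by
    rw [← sA, ← sK, ← transpose_mul, KA, transpose_smul, sJ]
  have JJ : J * J = m • J := by
    have e : (c₂ : ℝ) • (J * J) = (c₂ : ℝ) • (m • J) := by
      have : (c₂ : ℝ) • J = A * A - s ^ 2 • 1 := by rw [AA]; abel
      rw [← mul_smul_comm, this, mul_sub, ← mul_assoc, JA, smul_mul_assoc, KA, mul_smul_comm,
        mul_one, smul_smul, smul_smul, mul_comm (c₂ : ℝ), hmc]
      module
    exact smul_right_injective _ hcc e
  have JK : J * K = m • K := by
    have e : (k : ℝ) • (J * K) = (k : ℝ) • (m • K) := by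
      rw [← mul_smul_comm, ← JA, ← mul_assoc, JJ, smul_mul_assoc, JA, smul_comm]
    exact smul_right_injective _ hkc e
  have KJ : K * J = m • K := by
    rw [← sK, ← sJ, ← transpose_mul, JK, transpose_smul]
  have KK : K * K = m • J := by
    have e : (k : ℝ) • (K * K) = (k : ℝ) • (m • J) := by
      rw [← mul_smul_comm, ← JA, ← mul_assoc, KJ, smul_mul_assoc, KA, smul_comm]
    exact smul_right_injective _ hkc e
  rw [aux_alg_s12 A J K (qDist G 3 q) k c₂ s m (1 / q) hs (by linarith) hmc AA AJ AK JA KA JJ JK KJ KK]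
  · have : Finset.Icc 1 3 = ({1, 2, 3} : Finset ℕ) := by decide
    rw [qDist, this, hA, hJ, hK]
    simp [Finset.sum_range_succ]
    module
  · intro α β γ δ hab h0
    obtain ⟨x, -⟩ := hG.2.2.1
    have := congrFun (congrFun h0 x) x
    simp [hA, hJ, hK, distM] at this
    exact hab this
  · exact hm1
end
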